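/- Consider full-batch momentum gradient descent on the 2-layer diagonal linear network with step size γ > 0 and momentum β ∈ (0,1). Assume (u_k, v_k) converges to (u_∞, v_∞) with Δ_∞ = |u_∞² − v_∞²| coordinatewise strictly positive, that each coordinate of the sequences (w_{+,k})_k and (w_{−,k})_k is nonzero and keeps a constant sign in k, and that for every coordinate i there exist indices k and k' with w_{+,k+1,i} ≠ w_{+,k,i} and w_{−,k'+1,i} ≠ w_{−,k',i}. Let S_± := (1/(1−β)) Σ_{k=1}^∞ [ r(w_{±,k+1}/w_{±,k}) + β·r(w_{±,k}/w_{±,k+1}) ] and θ̃₀ := (1/4)(w_{+,0}² ⊙ exp(−2S₊) − w_{−,0}² ⊙ exp(−2S₋)). Then, with α = max(‖u₀‖_∞, ‖v₀‖_∞): |θ̃₀,i| < α² and Δ_{∞,i} < Δ_{0,i} for every coordinate i. -/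

import Mathlib

open Real Filter Finset

open scoped RealInnerProductSpace

/-- `r(z) = (z − 1) − ln|z|` for `z ≠ 0`. -/
noncomputable def rfun (z : ℝ) : ℝ := (z - 1) - Real.log |z|

/-!
The sums `w₊ = u + v` and differences `w₋ = u - v` satisfy the same scalar recursion
`w (k + 1) = w k + c k * w k + β * (w k - w (k - 1))`, with opposite drives `c = ∓γ∇L`.
Dividing by `w k` and telescoping the logarithms gives
`log (w (N + 1) / w 0) = (∑ c - ∑ (r(w_{k+1}/w_k) + β r(w_k/w_{k+1}))) / (1 - β) + o(1)`.
The error vanishes because the summands tend to `0` and `(√z - 1)² ≤ r(z)`, which forces the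
ratios `w_{k+1}/w_k` to tend to `1`.
Adding the identities for `w₊` and `w₋` cancels the drives, so that
`Δ_∞ = Δ_0 exp(-(S₊ + S₋))`. As `r ≥ 0` with equality only at `1`, both `S_±` are nonnegative,
and `S₊ + S₋ > 0` as soon as something moves.
The bound on `θ̃₀` holds because it is a quarter of the difference of two numbers in `(0, 4α²]`.
-/

open scoped Topology

section rfun

variable {z : ℝ}

lemma sq_sqrt_sub_one_le_rfun (hz : 0 < z) : (√z - 1) ^ 2 ≤ rfun z := by
  have hlog : Real.log z / 2 ≤ √z - 1 :=
    Real.log_sqrt hz.le ▸ Real.log_le_sub_one_of_pos (Real.sqrt_pos.2 hz)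
  rw [rfun, abs_of_pos hz]
  linarith [Real.sq_sqrt hz.le]

lemma rfun_nonneg (hz : 0 < z) : 0 ≤ rfun z :=
  (sq_nonneg _).trans (sq_sqrt_sub_one_le_rfun hz)

lemma rfun_pos (hz : 0 < z) (hz1 : z ≠ 1) : 0 < rfun z :=
  (sq_pos_of_ne_zero (sub_ne_zero.2 (mt Real.sqrt_eq_one.1 hz1))).trans_le
    (sq_sqrt_sub_one_le_rfun hz)

lemma tendsto_one_of_tendsto_rfun {X : Type*} {l : Filter X} {f : X → ℝ}
    (hf : ∀ a, 0 < f a) (hr : Tendsto (fun a => rfun (f a)) l (𝓝 0)) : Tendsto f l (𝓝 1) := by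
  have hsq : Tendsto (fun a => (√(f a) - 1) ^ 2) l (𝓝 0) :=
    squeeze_zero (fun _ => sq_nonneg _) (fun a => sq_sqrt_sub_one_le_rfun (hf a)) hr
  have habs : Tendsto (fun a => |√(f a) - 1|) l (𝓝 0) := by
    simpa only [Real.sqrt_sq_eq_abs, Real.sqrt_zero] using hsq.sqrt
  have hsqrt : Tendsto (fun a => √(f a)) l (𝓝 1) := by
    simpa only [sub_add_cancel, zero_add] using
      ((tendsto_zero_iff_abs_tendsto_zero _).2 habs).add_const 1
  simpa only [Real.sq_sqrt (hf _).le, one_pow] using hsqrt.pow 2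

end rfun

/-- The sequence `w` never vanishes and keeps its sign. -/
def HasConstantSign (w : ℕ → ℝ) : Prop :=
  (∀ k, 0 < w k) ∨ (∀ k, w k < 0)

namespace HasConstantSign

variable {w : ℕ → ℝ}

lemma ne_zero (hw : HasConstantSign w) (k : ℕ) : w k ≠ 0 :=
  hw.elim (fun h => (h k).ne') (fun h => (h k).ne)

protected lemma div_pos (hw : HasConstantSign w) (j k : ℕ) : 0 < w j / w k :=
  hw.elim (fun h => div_pos (h j) (h k)) (fun h => div_pos_of_neg_of_neg (h j) (h k))

end HasConstantSign

/-- The summand `r(w_{k+1}/w_k) + β r(w_k/w_{k+1})` of the series defining `S_±`. -/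
noncomputable def stepCost (β : ℝ) (w : ℕ → ℝ) (k : ℕ) : ℝ :=
  rfun (w (k + 1) / w k) + β * rfun (w k / w (k + 1))

/-- `S = (1/(1-β)) ∑_{k ≥ 1} stepCost β w k`, as a limit of partial sums; this is the quantity
`S_±` for `w = w_±`. -/
def HasTotalStepCost (β : ℝ) (w : ℕ → ℝ) (S : ℝ) : Prop :=
  Tendsto (fun N => (1 / (1 - β)) * ∑ k ∈ Finset.Icc 1 N, stepCost β w k) atTop (𝓝 S)

section StepCost

variable {β S : ℝ} {w : ℕ → ℝ}

lemma rfun_div_le_stepCost (hβ : 0 ≤ β) (hw : HasConstantSign w) (k : ℕ) :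
    rfun (w (k + 1) / w k) ≤ stepCost β w k :=
  le_add_of_nonneg_right (mul_nonneg hβ (rfun_nonneg (hw.div_pos _ _)))

lemma stepCost_nonneg (hβ : 0 ≤ β) (hw : HasConstantSign w) (k : ℕ) : 0 ≤ stepCost β w k :=
  (rfun_nonneg (hw.div_pos _ _)).trans (rfun_div_le_stepCost hβ hw k)

lemma stepCost_pos (hβ : 0 ≤ β) (hw : HasConstantSign w) {k : ℕ} (hk : w (k + 1) ≠ w k) :
    0 < stepCost β w k :=
  (rfun_pos (hw.div_pos _ _) fun h => hk (eq_of_div_eq_one h)).trans_le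
    (rfun_div_le_stepCost hβ hw k)

namespace HasTotalStepCost

lemma one_div_mul_stepCost_le (hS : HasTotalStepCost β w S) (hβ0 : 0 ≤ β) (hβ1 : β < 1)
    (hw : HasConstantSign w) {k : ℕ} (hk : 1 ≤ k) : 1 / (1 - β) * stepCost β w k ≤ S := by
  refine ge_of_tendsto hS ?_
  filter_upwards [eventually_ge_atTop k] with N hN
  have hc : 0 ≤ 1 / (1 - β) := one_div_nonneg.2 (sub_nonneg.2 hβ1.le)
  exact mul_le_mul_of_nonneg_left
    (single_le_sum (fun j _ => stepCost_nonneg hβ0 hw j) (mem_Icc.2 ⟨hk, hN⟩)) hc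

lemma nonneg (hS : HasTotalStepCost β w S) (hβ0 : 0 ≤ β) (hβ1 : β < 1)
    (hw : HasConstantSign w) : 0 ≤ S :=
  (mul_nonneg (one_div_nonneg.2 (sub_nonneg.2 hβ1.le)) (stepCost_nonneg hβ0 hw 1)).trans
    (hS.one_div_mul_stepCost_le hβ0 hβ1 hw le_rfl)

lemma pos (hS : HasTotalStepCost β w S) (hβ0 : 0 ≤ β) (hβ1 : β < 1)
    (hw : HasConstantSign w) (hrest : w 1 = w 0) (hmove : ∃ k, w (k + 1) ≠ w k) : 0 < S := by
  obtain ⟨k, hk⟩ := hmove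
  have hk1 : 1 ≤ k := Nat.one_le_iff_ne_zero.2 fun h => hk (h ▸ hrest)
  exact (mul_pos (one_div_pos.2 (sub_pos.2 hβ1)) (stepCost_pos hβ0 hw hk)).trans_le
    (hS.one_div_mul_stepCost_le hβ0 hβ1 hw hk1)

lemma tendsto_stepCost (hS : HasTotalStepCost β w S) (hβ : β ≠ 1) :
    Tendsto (fun k => stepCost β w (k + 1)) atTop (𝓝 0) := by
  have hβ_sub : 1 - β ≠ 0 := sub_ne_zero.2 hβ.symm
  have hdiff := ((((tendsto_add_atTop_iff_nat 1).2 hS).sub hS).const_mul (1 - β))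
  rw [sub_self, mul_zero] at hdiff
  refine hdiff.congr fun N => ?_
  rw [sum_Icc_succ_top (Nat.le_add_left 1 N)]
  field_simp
  ring

lemma tendsto_div (hS : HasTotalStepCost β w S) (hβ0 : 0 ≤ β) (hβ1 : β < 1)
    (hw : HasConstantSign w) : Tendsto (fun k => w k / w (k + 1)) atTop (𝓝 1) := by
  have hr : Tendsto (fun k => rfun (w (k + 1 + 1) / w (k + 1))) atTop (𝓝 0) :=
    squeeze_zero (fun _ => rfun_nonneg (hw.div_pos _ _)) (fun _ => rfun_div_le_stepCost hβ0 hw _)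
      (hS.tendsto_stepCost hβ1.ne)
  have hratio : Tendsto (fun k => w (k + 1) / w k) atTop (𝓝 1) :=
    (tendsto_add_atTop_iff_nat 1).1 (tendsto_one_of_tendsto_rfun (fun _ => hw.div_pos _ _) hr)
  simpa only [inv_div, inv_one] using hratio.inv₀ one_ne_zero

end HasTotalStepCost

end StepCost

/-- Heavy-ball recursion started at rest, whose force `c k * w k` is proportional to the current
iterate. Both `w₊` and `w₋` follow it. -/
structure IsDrivenMomentum (β : ℝ) (c w : ℕ → ℝ) : Prop where
  rest : w 1 = w 0
  step : ∀ k, 1 ≤ k → w (k + 1) = w k + c k * w k + β * (w k - w (k - 1))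

section Telescoping

variable {β S : ℝ} {c w : ℕ → ℝ}

lemma stepCost_eq {k : ℕ} (hk : w k ≠ 0) (hk1 : w (k + 1) ≠ 0) :
    stepCost β w k = (w (k + 1) / w k - 1) + β * (w k / w (k + 1) - 1)
      - (1 - β) * (Real.log (w (k + 1)) - Real.log (w k)) := by
  simp only [stepCost, rfun, Real.log_abs, Real.log_div hk hk1, Real.log_div hk1 hk]
  ring

namespace IsDrivenMomentum

lemma drive_eq (h : IsDrivenMomentum β c w) {k : ℕ} (hk : w (k + 1) ≠ 0) :
    c (k + 1) = (w (k + 2) / w (k + 1) - 1) + β * (w k / w (k + 1) - 1) := by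
  have hstep : w (k + 2) = w (k + 1) + c (k + 1) * w (k + 1) + β * (w (k + 1) - w k) :=
    h.step (k + 1) (Nat.le_add_left 1 k)
  field_simp
  linarith

lemma sum_stepCost (h : IsDrivenMomentum β c w) (hw : ∀ k, w k ≠ 0) (N : ℕ) :
    ∑ k ∈ Icc 1 N, stepCost β w k = ∑ k ∈ Icc 1 N, c k
      - (1 - β) * (Real.log (w (N + 1)) - Real.log (w 0)) + β * (w N / w (N + 1) - 1) := by
  induction N with
  | zero => simp [h.rest, div_self (hw 0)]
  | succ N ih =>
    rw [sum_Icc_succ_top (Nat.le_add_left 1 N), sum_Icc_succ_top (Nat.le_add_left 1 N), ih,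
      h.drive_eq (hw _), stepCost_eq (hw _) (hw _)]
    ring

lemma tendsto_log_sub_sum_drive (h : IsDrivenMomentum β c w) (hβ0 : 0 ≤ β) (hβ1 : β < 1)
    (hw : HasConstantSign w) (hS : HasTotalStepCost β w S) :
    Tendsto (fun N => Real.log (w (N + 1) / w 0) - 1 / (1 - β) * ∑ k ∈ Icc 1 N, c k)
      atTop (𝓝 (-S)) := by
  have hβ_sub : 1 - β ≠ 0 := (sub_pos.2 hβ1).ne'
  have hboundary : Tendsto (fun N => β / (1 - β) * (w N / w (N + 1) - 1)) atTop (𝓝 0) := by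
    simpa only [sub_self, mul_zero] using
      ((hS.tendsto_div hβ0 hβ1 hw).sub_const 1).const_mul (β / (1 - β))
  have hlim := hboundary.sub hS
  rw [zero_sub] at hlim
  refine hlim.congr fun N => ?_
  rw [h.sum_stepCost hw.ne_zero, Real.log_div (hw.ne_zero _) (hw.ne_zero _)]
  field_simp
  ring

end IsDrivenMomentum

lemma tendsto_mul_of_opposite_drives {p m : ℕ → ℝ} {Sp Sm : ℝ}
    (hβ0 : 0 ≤ β) (hβ1 : β < 1)
    (hp : IsDrivenMomentum β (fun k => -c k) p) (hm : IsDrivenMomentum β c m)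
    (hpsign : HasConstantSign p) (hmsign : HasConstantSign m)
    (hSp : HasTotalStepCost β p Sp) (hSm : HasTotalStepCost β m Sm) :
    Tendsto (fun k => p k * m k) atTop (𝓝 (p 0 * m 0 * Real.exp (-(Sp + Sm)))) := by
  have hp0 : p 0 ≠ 0 := hpsign.ne_zero 0
  have hm0 : m 0 ≠ 0 := hmsign.ne_zero 0
  have hlog : Tendsto (fun N => Real.log (p (N + 1) / p 0) + Real.log (m (N + 1) / m 0))
      atTop (𝓝 (-(Sp + Sm))) := by
    rw [neg_add]
    refine ((hp.tendsto_log_sub_sum_drive hβ0 hβ1 hpsign hSp).add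
      (hm.tendsto_log_sub_sum_drive hβ0 hβ1 hmsign hSm)).congr fun N => ?_
    rw [sum_neg_distrib]
    ring
  have hprod := ((Real.continuous_exp.tendsto _).comp hlog).const_mul (p 0 * m 0)
  refine (tendsto_add_atTop_iff_nat 1).1 (hprod.congr fun N => ?_)
  rw [Function.comp_apply, Real.exp_add, Real.exp_log (hpsign.div_pos _ _),
    Real.exp_log (hmsign.div_pos _ _)]
  field_simp

end Telescoping

/-- One coordinate of momentum descent on a 2-layer diagonal linear network. The sequence `g`
stands for the gradients `∇L(θ_k)` but is left arbitrary. -/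
structure IsDiagonalMomentum (γ β : ℝ) (g u v : ℕ → ℝ) : Prop where
  rest_left : u 1 = u 0
  rest_right : v 1 = v 0
  step_left : ∀ k, 1 ≤ k → u (k + 1) = u k - γ * (g k * v k) + β * (u k - u (k - 1))
  step_right : ∀ k, 1 ≤ k → v (k + 1) = v k - γ * (g k * u k) + β * (v k - v (k - 1))

namespace IsDiagonalMomentum

variable {γ β Sp Sm : ℝ} {g u v : ℕ → ℝ}

lemma add (h : IsDiagonalMomentum γ β g u v) :
    IsDrivenMomentum β (fun k => -(γ * g k)) (fun k => u k + v k) where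
  rest := by rw [h.rest_left, h.rest_right]
  step k hk := by rw [h.step_left k hk, h.step_right k hk]; ring

lemma sub (h : IsDiagonalMomentum γ β g u v) :
    IsDrivenMomentum β (fun k => γ * g k) (fun k => u k - v k) where
  rest := by rw [h.rest_left, h.rest_right]
  step k hk := by rw [h.step_left k hk, h.step_right k hk]; ring

lemma tendsto_balancedness (h : IsDiagonalMomentum γ β g u v) (hβ0 : 0 ≤ β) (hβ1 : β < 1)
    (hp : HasConstantSign fun k => u k + v k) (hm : HasConstantSign fun k => u k - v k)
    (hSp : HasTotalStepCost β (fun k => u k + v k) Sp)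
    (hSm : HasTotalStepCost β (fun k => u k - v k) Sm) :
    Tendsto (fun k => |u k ^ 2 - v k ^ 2|) atTop
      (𝓝 (|u 0 ^ 2 - v 0 ^ 2| * Real.exp (-(Sp + Sm)))) := by
  simpa only [← sq_sub_sq, abs_mul, Real.abs_exp] using
    (tendsto_mul_of_opposite_drives hβ0 hβ1 h.add h.sub hp hm hSp hSm).abs

end IsDiagonalMomentum

lemma abs_quarter_sq_exp_sub_sq_exp_lt {a b M s t : ℝ} (ha : |a| ≤ M) (hb : |b| ≤ M)
    (hadd : a + b ≠ 0) (hsub : a - b ≠ 0) (hs : 0 ≤ s) (ht : 0 ≤ t) :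
    |1 / 4 * ((a + b) ^ 2 * Real.exp (-(2 * s)) - (a - b) ^ 2 * Real.exp (-(2 * t)))| < M ^ 2 := by
  have weighted_mem {w r : ℝ} (hw : w ≠ 0) (hwM : |w| ≤ 2 * M) (hr : 0 ≤ r) :
      0 < w ^ 2 * Real.exp (-(2 * r)) ∧ w ^ 2 * Real.exp (-(2 * r)) ≤ 4 * M ^ 2 := by
    refine ⟨by positivity, ?_⟩
    calc w ^ 2 * Real.exp (-(2 * r)) ≤ w ^ 2 :=
          mul_le_of_le_one_right (sq_nonneg w) (Real.exp_le_one_iff.2 (by linarith))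
      _ ≤ (2 * M) ^ 2 := sq_le_sq.2 (hwM.trans (le_abs_self _))
      _ = 4 * M ^ 2 := by ring
  obtain ⟨hp_pos, hp_le⟩ := weighted_mem hadd ((abs_add_le a b).trans (by linarith)) hs
  obtain ⟨hm_pos, hm_le⟩ := weighted_mem hsub ((abs_sub a b).trans (by linarith)) ht
  rw [abs_lt]
  constructor <;> linarith

lemma tendsto_abs_apply_sq_sub_apply_sq {X ι : Type*} {l : Filter X}
    {u v : X → EuclideanSpace ℝ ι} {a b : EuclideanSpace ℝ ι} (hu : Tendsto u l (𝓝 a))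
    (hv : Tendsto v l (𝓝 b)) (i : ι) :
    Tendsto (fun k => |u k i ^ 2 - v k i ^ 2|) l (𝓝 |a i ^ 2 - b i ^ 2|) := by
  have hcoord : Continuous fun w : EuclideanSpace ℝ ι => w i := by fun_prop
  exact ((((hcoord.tendsto a).comp hu).pow 2).sub (((hcoord.tendsto b).comp hv).pow 2)).abs

theorem stmt_19_general {ι : Type*} [Finite ι] {γ β : ℝ} (hβ0 : 0 ≤ β) (hβ1 : β < 1)
    {g u v : ℕ → ι → ℝ} (hmgd : ∀ i, IsDiagonalMomentum γ β (g · i) (u · i) (v · i))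
    (hp : ∀ i, HasConstantSign fun k => u k i + v k i)
    (hm : ∀ i, HasConstantSign fun k => u k i - v k i)
    (hmove : ∀ i, (∃ k, u (k + 1) i + v (k + 1) i ≠ u k i + v k i) ∨
      ∃ k, u (k + 1) i - v (k + 1) i ≠ u k i - v k i)
    {Sp Sm : ι → ℝ} (hSp : ∀ i, HasTotalStepCost β (fun k => u k i + v k i) (Sp i))
    (hSm : ∀ i, HasTotalStepCost β (fun k => u k i - v k i) (Sm i))
    {Δ : ι → ℝ} (hΔ : ∀ i, Tendsto (fun k => |u k i ^ 2 - v k i ^ 2|) atTop (𝓝 (Δ i))) (i : ι) :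
    |1 / 4 * ((u 0 i + v 0 i) ^ 2 * Real.exp (-(2 * Sp i)) -
      (u 0 i - v 0 i) ^ 2 * Real.exp (-(2 * Sm i)))| < max (⨆ j, |u 0 j|) (⨆ j, |v 0 j|) ^ 2 ∧
      Δ i < |u 0 i ^ 2 - v 0 i ^ 2| := by
  have hp0 : u 0 i + v 0 i ≠ 0 := (hp i).ne_zero 0
  have hm0 : u 0 i - v 0 i ≠ 0 := (hm i).ne_zero 0
  have hSp0 : 0 ≤ Sp i := (hSp i).nonneg hβ0 hβ1 (hp i)
  have hSm0 : 0 ≤ Sm i := (hSm i).nonneg hβ0 hβ1 (hm i)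
  have le_iSup_abs (w : ι → ℝ) : |w i| ≤ ⨆ j, |w j| :=
    le_ciSup (f := fun j => |w j|) (Set.finite_range _).bddAbove i
  refine ⟨abs_quarter_sq_exp_sub_sq_exp_lt (le_max_of_le_left (le_iSup_abs _))
    (le_max_of_le_right (le_iSup_abs _)) hp0 hm0 hSp0 hSm0, ?_⟩
  have hS_pos : 0 < Sp i + Sm i := (hmove i).elim
    (fun h => add_pos_of_pos_of_nonneg ((hSp i).pos hβ0 hβ1 (hp i) (hmgd i).add.rest h) hSm0)
    (fun h => add_pos_of_nonneg_of_pos hSp0 ((hSm i).pos hβ0 hβ1 (hm i) (hmgd i).sub.rest h))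
  have hΔ_eq : Δ i = |u 0 i ^ 2 - v 0 i ^ 2| * Real.exp (-(Sp i + Sm i)) :=
    tendsto_nhds_unique (hΔ i)
      ((hmgd i).tendsto_balancedness hβ0 hβ1 (hp i) (hm i) (hSp i) (hSm i))
  have hΔ0 : 0 < |u 0 i ^ 2 - v 0 i ^ 2| := by
    rw [sq_sub_sq]
    exact abs_pos.2 (mul_ne_zero hp0 hm0)
  rw [hΔ_eq]
  exact mul_lt_of_lt_one_right hΔ0 (Real.exp_lt_one_iff.2 (neg_lt_zero.2 hS_pos))

/-- For full-batch MGD on the 2-layer diagonal linear network with `β ∈ (0,1)`,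
if the iterates converge with strictly positive asymptotic balancedness, every coordinate of
`w_{±,k}` is nonzero and keeps a constant sign in `k`, and no coordinate sequence of `w_±` is
eventually constant from the start (there exist consecutive distinct values), then, with
`α = max(‖u₀‖_∞, ‖v₀‖_∞)`, the perturbed initialisation satisfies `|θ̃₀,i| < α²` and
`Δ_{∞,i} < Δ_{0,i}` for every coordinate `i`. -/
theorem stmt_19 {n d : ℕ}
    (x : Fin n → EuclideanSpace ℝ (Fin d)) (y : Fin n → ℝ)
    (L : EuclideanSpace ℝ (Fin d) → ℝ)
    (hL : L = fun θ => (1 / (2 * (n : ℝ))) * ∑ i, (y i - ⟪x i, θ⟫) ^ 2)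
    (γ β : ℝ) (hγ : 0 < γ) (hβ0 : 0 < β) (hβ1 : β < 1)
    (u v : ℕ → EuclideanSpace ℝ (Fin d))
    (θ : ℕ → EuclideanSpace ℝ (Fin d)) (hθ : ∀ k i, θ k i = u k i * v k i)
    (h1u : u 1 = u 0) (h1v : v 1 = v 0)
    (hrecu : ∀ k, 1 ≤ k → ∀ i,
      u (k + 1) i = u k i - γ * (gradient L (θ k) i * v k i) + β * (u k i - u (k - 1) i))
    (hrecv : ∀ k, 1 ≤ k → ∀ i,
      v (k + 1) i = v k i - γ * (gradient L (θ k) i * u k i) + β * (v k i - v (k - 1) i))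
    (ulim vlim : EuclideanSpace ℝ (Fin d))
    (hu : Tendsto u atTop (nhds ulim)) (hv : Tendsto v atTop (nhds vlim))
    (hDinfpos : ∀ i, 0 < |ulim i ^ 2 - vlim i ^ 2|)
    -- each coordinate of w_± is nonzero and keeps a constant sign in k
    (hsignp : ∀ i, (∀ k, 0 < u k i + v k i) ∨ (∀ k, u k i + v k i < 0))
    (hsignm : ∀ i, (∀ k, 0 < u k i - v k i) ∨ (∀ k, u k i - v k i < 0))
    -- each coordinate of w_± takes at least two consecutive distinct values
    (hmovep : ∀ i, ∃ k, u (k + 1) i + v (k + 1) i ≠ u k i + v k i)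
    (hmovem : ∀ i, ∃ k, u (k + 1) i - v (k + 1) i ≠ u k i - v k i)
    -- the sums S_± of the series
    (Sp Sm : Fin d → ℝ)
    (hSp : ∀ i,
      Tendsto
        (fun N => (1 / (1 - β)) *
          ∑ k ∈ Finset.Icc 1 N,
            (rfun ((u (k + 1) i + v (k + 1) i) / (u k i + v k i)) +
              β * rfun ((u k i + v k i) / (u (k + 1) i + v (k + 1) i))))
        atTop (nhds (Sp i)))
    (hSm : ∀ i,
      Tendsto
        (fun N => (1 / (1 - β)) *
          ∑ k ∈ Finset.Icc 1 N,
            (rfun ((u (k + 1) i - v (k + 1) i) / (u k i - v k i)) +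
              β * rfun ((u k i - v k i) / (u (k + 1) i - v (k + 1) i))))
        atTop (nhds (Sm i)))
    -- the perturbed initialisation
    (θtilde : EuclideanSpace ℝ (Fin d))
    (hθtilde : ∀ i, θtilde i = (1 / 4) *
      ((u 0 i + v 0 i) ^ 2 * Real.exp (-(2 * Sp i)) -
        (u 0 i - v 0 i) ^ 2 * Real.exp (-(2 * Sm i))))
    -- the initialisation scale
    (α : ℝ) (hα : α = max (⨆ i, |u 0 i|) (⨆ i, |v 0 i|)) :
    ∀ i, |θtilde i| < α ^ 2 ∧ |ulim i ^ 2 - vlim i ^ 2| < |u 0 i ^ 2 - v 0 i ^ 2| := by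
  simpa only [hθtilde, hα] using stmt_19_general hβ0.le hβ1
    (fun i => ⟨by rw [h1u], by rw [h1v], (hrecu · · i), (hrecv · · i)⟩) hsignp hsignm
    (fun i => .inl (hmovep i)) hSp hSm (tendsto_abs_apply_sq_sub_apply_sq hu hv)
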